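/- arXiv:1912.13515 — 5 statements merged into one kernel-verified Lean document; each statement's English description precedes it below -/
import Mathlib

section
/- Let Φ : ℝ^d → ℝ be differentiable with L-Lipschitz gradient, bounded below by Φ* (i.e. Φ(x) ≥ Φ* for all x), let η > 0 satisfy Lη ≤ 1/2, and let x_0, F_0, F_1, …, F_{T−1} ∈ ℝ^d define iterates x_{t+1} = x_t − η F_t for t = 0,…,T−1 (T ≥ 1). Then (1/T) Σ_{t=0}^{T−1} ‖∇Φ(x_t)‖² ≤ (2/(Tη)) (Φ(x_0) − Φ*) + (1/T) ( Σ_{t=0}^{T−1} ‖F_t − ∇Φ(x_t)‖² − (1/2) Σ_{t=0}^{T−1} ‖F_t‖² ). -/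
open scoped BigOperators

/-! A one-sided Lipschitz bound on `∇Φ` integrates to the descent inequality
`Φ y ≤ Φ x + ⟪∇Φ x, y - x⟫ + (L / 2) ‖y - x‖ ^ 2`. At `y = x - η • v` the polarization identity
`2 ⟪∇Φ x, v⟫ = ‖∇Φ x‖ ^ 2 + ‖v‖ ^ 2 - ‖v - ∇Φ x‖ ^ 2` trades the inner product for the error of
`v` as an estimate of `∇Φ x`, and `L * η ≤ 1 / 2` leaves half of `‖v‖ ^ 2` to spare. Summing along
the iterates, the decrements of `Φ` telescope. -/

open scoped Gradient RealInnerProductSpace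

section DescentLemma

theorem image_le_quadratic_of_deriv_right_le_affine {φ φ' : ℝ → ℝ} {a b m C : ℝ}
    (hab : a ≤ b) (hφ : ContinuousOn φ (Set.Icc a b))
    (hφ' : ∀ s ∈ Set.Ico a b, HasDerivWithinAt φ (φ' s) (Set.Ici s) s)
    (hle : ∀ s ∈ Set.Ico a b, φ' s ≤ m + C * (s - a)) :
    φ b ≤ φ a + m * (b - a) + C / 2 * (b - a) ^ 2 := by
  have hquad (s : ℝ) : HasDerivAt (fun s ↦ φ a + m * (s - a) + C / 2 * (s - a) ^ 2)
      (m + C * (s - a)) s := by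
    have hsub : HasDerivAt (fun s ↦ s - a) 1 s := (hasDerivAt_id s).sub_const a
    refine (((hsub.const_mul m).const_add (φ a)).add
      ((hsub.pow 2).const_mul (C / 2))).congr_deriv ?_
    norm_num
    ring
  exact image_le_of_deriv_right_le_deriv_boundary hφ hφ' (by simp)
    (fun s _ ↦ (hquad s).continuousAt.continuousWithinAt)
    (fun s _ ↦ (hquad s).hasDerivWithinAt) hle (Set.right_mem_Icc.2 hab)

variable {E : Type*} [NormedAddCommGroup E] [NormedSpace ℝ E]

theorem image_le_add_add_sq_of_hasFDerivAt_segment {f : E → ℝ} {f' : E → E →L[ℝ] ℝ} {x y : E}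
    {L : ℝ} (hf : ∀ z ∈ segment ℝ x y, HasFDerivAt f (f' z) z)
    (hf' : ∀ z ∈ segment ℝ x y, (f' z - f' x) (z - x) ≤ L * ‖z - x‖ ^ 2) :
    f y ≤ f x + f' x (y - x) + L / 2 * ‖y - x‖ ^ 2 := by
  let γ : ℝ → E := AffineMap.lineMap x y
  have hγ : ∀ s ∈ Set.Icc (0 : ℝ) 1, γ s ∈ segment ℝ x y := fun s hs ↦
    segment_eq_image_lineMap ℝ x y ▸ Set.mem_image_of_mem γ hs
  have hderiv : ∀ s ∈ Set.Icc (0 : ℝ) 1, HasDerivAt (f ∘ γ) (f' (γ s) (y - x)) s := fun s hs ↦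
    (hf _ (hγ s hs)).comp_hasDerivAt s AffineMap.hasDerivAt_lineMap
  have hslope : ∀ s ∈ Set.Ico (0 : ℝ) 1,
      f' (γ s) (y - x) ≤ f' x (y - x) + L * ‖y - x‖ ^ 2 * (s - 0) := by
    intro s hs
    rcases hs.1.eq_or_lt with rfl | hs_pos
    · simp [γ]
    have hdisp : γ s - x = s • (y - x) := by simp [γ, AffineMap.lineMap_apply]
    have hmul : s * (f' (γ s) (y - x) - f' x (y - x)) ≤ s * (L * ‖y - x‖ ^ 2 * s) := by
      have h := hf' _ (hγ s (Set.Ico_subset_Icc_self hs))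
      rw [hdisp, map_smul, norm_smul, Real.norm_of_nonneg hs.1, smul_eq_mul,
        sub_apply] at h
      linarith
    linarith [le_of_mul_le_mul_left hmul hs_pos]
  have hbound := image_le_quadratic_of_deriv_right_le_affine zero_le_one
    (fun s hs ↦ (hderiv s hs).continuousAt.continuousWithinAt)
    (fun s hs ↦ (hderiv s (Set.Ico_subset_Icc_self hs)).hasDerivWithinAt) hslope
  simp only [Function.comp_apply, γ, AffineMap.lineMap_apply_zero, AffineMap.lineMap_apply_one]
    at hbound
  linarith

end DescentLemma

theorem real_inner_sub_sub_le_of_norm_sub_le {E : Type*} [NormedAddCommGroup E]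
    [InnerProductSpace ℝ E] {g : E → E} {L : ℝ} {x y : E} (h : ‖g y - g x‖ ≤ L * ‖y - x‖) :
    ⟪g y - g x, y - x⟫ ≤ L * ‖y - x‖ ^ 2 :=
  calc ⟪g y - g x, y - x⟫ ≤ ‖g y - g x‖ * ‖y - x‖ := real_inner_le_norm _ _
    _ ≤ L * ‖y - x‖ * ‖y - x‖ := by gcongr
    _ = L * ‖y - x‖ ^ 2 := by ring

section InexactGradientDescent

variable {E : Type*} [NormedAddCommGroup E] [InnerProductSpace ℝ E] [CompleteSpace E]
  {Φ : E → ℝ} {L η : ℝ}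

theorem image_le_add_inner_gradient_add_sq (hΦ : Differentiable ℝ Φ)
    (hgrad : ∀ x y, ⟪∇ Φ y - ∇ Φ x, y - x⟫ ≤ L * ‖y - x‖ ^ 2) (x y : E) :
    Φ y ≤ Φ x + ⟪∇ Φ x, y - x⟫ + L / 2 * ‖y - x‖ ^ 2 := by
  rw [inner_gradient_left]
  refine image_le_add_add_sq_of_hasFDerivAt_segment (fun z _ ↦ (hΦ z).hasFDerivAt) fun z _ ↦ ?_
  simpa only [inner_sub_left, inner_gradient_left, sub_apply] using hgrad x z

theorem norm_gradient_sq_le_of_step (hη : 0 < η) (hLη : L * η ≤ 1 / 2)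
    (hΦ : Differentiable ℝ Φ)
    (hgrad : ∀ x y, ⟪∇ Φ y - ∇ Φ x, y - x⟫ ≤ L * ‖y - x‖ ^ 2) (x v : E) :
    ‖∇ Φ x‖ ^ 2 ≤ 2 / η * (Φ x - Φ (x - η • v)) + (‖v - ∇ Φ x‖ ^ 2 - 1 / 2 * ‖v‖ ^ 2) := by
  have hdescent : Φ (x - η • v) ≤ Φ x - η * ⟪∇ Φ x, v⟫ + L / 2 * (η * ‖v‖) ^ 2 := by
    have h := image_le_add_inner_gradient_add_sq hΦ hgrad x (x - η • v)
    rwa [sub_sub_cancel_left, inner_neg_right, real_inner_smul_right, norm_neg, norm_smul,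
      Real.norm_of_nonneg hη.le, ← sub_eq_add_neg] at h
  have hstep : L * η * (η * ‖v‖ ^ 2) ≤ 1 / 2 * (η * ‖v‖ ^ 2) := by gcongr
  have hdecrease : 2 * ⟪∇ Φ x, v⟫ - 1 / 2 * ‖v‖ ^ 2 ≤ 2 / η * (Φ x - Φ (x - η • v)) := by
    rw [div_mul_eq_mul_div 2 η, le_div_iff₀ hη]
    linarith
  have hpolar : ‖v - ∇ Φ x‖ ^ 2 = ‖v‖ ^ 2 - 2 * ⟪∇ Φ x, v⟫ + ‖∇ Φ x‖ ^ 2 := by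
    rw [norm_sub_sq_real, real_inner_comm]
  linarith

theorem sum_norm_gradient_sq_le (hη : 0 < η) (hLη : L * η ≤ 1 / 2) (hΦ : Differentiable ℝ Φ)
    (hgrad : ∀ x y, ⟪∇ Φ y - ∇ Φ x, y - x⟫ ≤ L * ‖y - x‖ ^ 2) {T : ℕ} {x F : ℕ → E}
    (hupd : ∀ t < T, x (t + 1) = x t - η • F t) :
    ∑ t ∈ Finset.range T, ‖∇ Φ (x t)‖ ^ 2
      ≤ 2 / η * (Φ (x 0) - Φ (x T))
        + (∑ t ∈ Finset.range T, ‖F t - ∇ Φ (x t)‖ ^ 2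
          - 1 / 2 * ∑ t ∈ Finset.range T, ‖F t‖ ^ 2) :=
  calc ∑ t ∈ Finset.range T, ‖∇ Φ (x t)‖ ^ 2
      ≤ ∑ t ∈ Finset.range T, (2 / η * (Φ (x t) - Φ (x (t + 1)))
          + (‖F t - ∇ Φ (x t)‖ ^ 2 - 1 / 2 * ‖F t‖ ^ 2)) := by
        refine Finset.sum_le_sum fun t ht ↦ ?_
        rw [hupd t (Finset.mem_range.1 ht)]
        exact norm_gradient_sq_le_of_step hη hLη hΦ hgrad (x t) (F t)
    _ = _ := by
        rw [Finset.sum_add_distrib, ← Finset.mul_sum, Finset.sum_range_sub',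
          Finset.sum_sub_distrib, ← Finset.mul_sum]

theorem telescoped_descent_inequality_general {Φstar : ℝ} {T : ℕ} (hT : 1 ≤ T) (hη : 0 < η)
    (hLη : L * η ≤ 1 / 2) (hΦ : Differentiable ℝ Φ)
    (hgrad : ∀ x y, ⟪∇ Φ y - ∇ Φ x, y - x⟫ ≤ L * ‖y - x‖ ^ 2) {x F : ℕ → E}
    (hbound : Φstar ≤ Φ (x T)) (hupd : ∀ t < T, x (t + 1) = x t - η • F t) :
    (1 / (T : ℝ)) * ∑ t ∈ Finset.range T, ‖∇ Φ (x t)‖ ^ 2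
      ≤ 2 / ((T : ℝ) * η) * (Φ (x 0) - Φstar)
        + (1 / (T : ℝ)) * (∑ t ∈ Finset.range T, ‖F t - ∇ Φ (x t)‖ ^ 2
            - 1 / 2 * ∑ t ∈ Finset.range T, ‖F t‖ ^ 2) := by
  have hT_pos : (0 : ℝ) < T := by exact_mod_cast hT
  have hscale : 2 / ((T : ℝ) * η) * (Φ (x 0) - Φstar)
      = 1 / (T : ℝ) * (2 / η * (Φ (x 0) - Φstar)) := by
    field_simp
  rw [hscale, ← mul_add, mul_le_mul_iff_right₀ (one_div_pos.2 hT_pos)]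
  refine (sum_norm_gradient_sq_le hη hLη hΦ hgrad hupd).trans ?_
  gcongr

end InexactGradientDescent

/-- Telescoped descent inequality along the iterates `x_{t+1} = x_t − η F_t`:
`(1/T) Σ ‖∇Φ(x_t)‖² ≤ (2/(Tη))(Φ(x_0) − Φ*) + (1/T)(Σ ‖F_t − ∇Φ(x_t)‖² − (1/2) Σ ‖F_t‖²)`. -/
theorem telescoped_descent_inequality
    (d : ℕ) (L η Φstar : ℝ) (T : ℕ) (hT : 1 ≤ T)
    (hL : 0 < L) (hη : 0 < η) (hLη : L * η ≤ 1 / 2)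
    (Φ : EuclideanSpace ℝ (Fin d) → ℝ) (hΦ : Differentiable ℝ Φ)
    (hlip : ∀ x x', ‖gradient Φ x - gradient Φ x'‖ ≤ L * ‖x - x'‖)
    (hbound : ∀ x, Φstar ≤ Φ x)
    (x F : ℕ → EuclideanSpace ℝ (Fin d))
    (hupd : ∀ t < T, x (t + 1) = x t - η • F t) :
    (1 / (T : ℝ)) * ∑ t ∈ Finset.range T, ‖gradient Φ (x t)‖ ^ 2
      ≤ 2 / ((T : ℝ) * η) * (Φ (x 0) - Φstar)
        + (1 / (T : ℝ)) * (∑ t ∈ Finset.range T, ‖F t - gradient Φ (x t)‖ ^ 2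
            - 1 / 2 * ∑ t ∈ Finset.range T, ‖F t‖ ^ 2) := by
  exact telescoped_descent_inequality_general hT hη hLη hΦ
    (fun y z ↦ real_inner_sub_sub_le_of_norm_sub_le (hlip z y)) (hbound (x T)) hupd
end

section
/- Let q ≥ 1 be an integer, T ≥ 1 an integer, C ≥ 0 and K ≥ 0 real numbers with Kq ≤ 1/2, and let (a_t)_{t=0}^{T−1}, (b_t)_{t=0}^{T−1} be nonnegative reals such that for every t with 0 ≤ t ≤ T−1, a_t ≤ C + K Σ_{s = ⌊t/q⌋·q}^{t−1} b_s. Then (1/T) Σ_{t=0}^{T−1} a_t − (1/(2T)) Σ_{t=0}^{T−1} b_t ≤ C. -/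
open scoped BigOperators

/-!
Sum the recursion over `t < T` and exchange the order of summation: an index `s` contributes to the
bound on `a t` only for the later `t` in its own epoch, and there are at most `q - 1` of these.
Hence, for `K ≥ 0`, `∑ a t ≤ T C + K (q - 1) ∑ b s`.
-/

theorem sum_sum_le_nsmul_sum_of_card_le {ι κ M : Type*} [DecidableEq κ]
    [AddCommMonoid M] [PartialOrder M] [IsOrderedAddMonoid M]
    {A : Finset ι} {B : Finset κ} {I : ι → Finset κ} {f : κ → M} {n : ℕ}
    (hf : ∀ s ∈ B, 0 ≤ f s) (hI : ∀ t ∈ A, I t ⊆ B)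
    (hcard : ∀ s ∈ B, (A.filter fun t ↦ s ∈ I t).card ≤ n) :
    ∑ t ∈ A, ∑ s ∈ I t, f s ≤ n • ∑ s ∈ B, f s :=
  calc ∑ t ∈ A, ∑ s ∈ I t, f s
      = ∑ s ∈ B, ∑ _t ∈ A.filter (fun t ↦ s ∈ I t), f s := by
        refine Finset.sum_comm' fun t s ↦ ?_
        rw [Finset.mem_filter]
        exact ⟨fun h ↦ ⟨h, hI t h.1 h.2⟩, fun h ↦ h.1⟩
    _ = ∑ s ∈ B, (A.filter fun t ↦ s ∈ I t).card • f s := by simp only [Finset.sum_const]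
    _ ≤ ∑ s ∈ B, n • f s :=
        Finset.sum_le_sum fun s hs ↦ nsmul_le_nsmul_left (hf s hs) (hcard s hs)
    _ = n • ∑ s ∈ B, f s := (Finset.smul_sum ..).symm

theorem card_filter_mem_Ico_div_mul_le {q : ℕ} (hq : 0 < q) (A : Finset ℕ) (s : ℕ) :
    (A.filter fun t ↦ s ∈ Finset.Ico (t / q * q) t).card ≤ q - 1 := by
  have hsub : (A.filter fun t ↦ s ∈ Finset.Ico (t / q * q) t) ⊆ Finset.Ioo s (s + q) := by
    intro t ht
    obtain ⟨hstart, hlt⟩ := Finset.mem_Ico.1 (Finset.mem_filter.1 ht).2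
    exact Finset.mem_Ioo.2
      ⟨hlt, (Nat.lt_div_mul_add hq).trans_le (Nat.add_le_add_right hstart q)⟩
  simpa only [Nat.card_Ioo, Nat.add_sub_cancel_left] using Finset.card_le_card hsub

theorem sum_range_sum_Ico_div_mul_le_nsmul {M : Type*}
    [AddCommMonoid M] [PartialOrder M] [IsOrderedAddMonoid M]
    {q T : ℕ} (hq : 0 < q) {b : ℕ → M} (hb : ∀ t < T, 0 ≤ b t) :
    ∑ t ∈ Finset.range T, ∑ s ∈ Finset.Ico (t / q * q) t, b s
      ≤ (q - 1) • ∑ s ∈ Finset.range T, b s := by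
  refine sum_sum_le_nsmul_sum_of_card_le (fun s hs ↦ hb s (Finset.mem_range.1 hs))
    (fun t ht s hs ↦ ?_) fun s _ ↦ card_filter_mem_Ico_div_mul_le hq _ s
  exact Finset.mem_range.2 ((Finset.mem_Ico.1 hs).2.trans (Finset.mem_range.1 ht))

theorem mul_sum_range_sum_Ico_div_mul_le {R : Type*} [Ring R] [LinearOrder R] [IsOrderedRing R]
    {q T : ℕ} (hq : 0 < q) {K θ : R} (hθ : 0 ≤ θ) (hKq : K * (q - 1) ≤ θ)
    {b : ℕ → R} (hb : ∀ t < T, 0 ≤ b t) :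
    K * ∑ t ∈ Finset.range T, ∑ s ∈ Finset.Ico (t / q * q) t, b s
      ≤ θ * ∑ s ∈ Finset.range T, b s := by
  have hB : 0 ≤ ∑ s ∈ Finset.range T, b s :=
    Finset.sum_nonneg fun s hs ↦ hb s (Finset.mem_range.1 hs)
  rcases le_total 0 K with hK | hK
  · calc K * ∑ t ∈ Finset.range T, ∑ s ∈ Finset.Ico (t / q * q) t, b s
        ≤ K * ((q - 1) • ∑ s ∈ Finset.range T, b s) :=
          mul_le_mul_of_nonneg_left (sum_range_sum_Ico_div_mul_le_nsmul hq hb) hK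
      _ = K * (q - 1) * ∑ s ∈ Finset.range T, b s := by
          rw [nsmul_eq_mul, Nat.cast_pred hq, mul_assoc]
      _ ≤ θ * ∑ s ∈ Finset.range T, b s := mul_le_mul_of_nonneg_right hKq hB
  · have hS : 0 ≤ ∑ t ∈ Finset.range T, ∑ s ∈ Finset.Ico (t / q * q) t, b s :=
      Finset.sum_nonneg fun t ht ↦ Finset.sum_nonneg fun s hs ↦
        hb s ((Finset.mem_Ico.1 hs).2.trans (Finset.mem_range.1 ht))
    exact (mul_nonpos_of_nonpos_of_nonneg hK hS).trans (mul_nonneg hθ hB)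

theorem epoch_recursion_average_bound_general {𝕜 : Type*}
    [Field 𝕜] [LinearOrder 𝕜] [IsStrictOrderedRing 𝕜]
    {q T : ℕ} (hq : 0 < q) (hT : 0 < T) {C K θ : 𝕜} (hθ : 0 ≤ θ) (hKq : K * (q - 1) ≤ θ)
    {a b : ℕ → 𝕜} (hb : ∀ t < T, 0 ≤ b t)
    (hrec : ∀ t < T, a t ≤ C + K * ∑ s ∈ Finset.Ico (t / q * q) t, b s) :
    1 / (T : 𝕜) * ∑ t ∈ Finset.range T, a t - θ / T * ∑ t ∈ Finset.range T, b t ≤ C := by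
  have hsum : ∑ t ∈ Finset.range T, a t ≤ T * C + θ * ∑ t ∈ Finset.range T, b t :=
    calc ∑ t ∈ Finset.range T, a t
        ≤ ∑ t ∈ Finset.range T, (C + K * ∑ s ∈ Finset.Ico (t / q * q) t, b s) :=
          Finset.sum_le_sum fun t ht ↦ hrec t (Finset.mem_range.1 ht)
      _ = T * C + K * ∑ t ∈ Finset.range T, ∑ s ∈ Finset.Ico (t / q * q) t, b s := by
          rw [Finset.sum_add_distrib, ← Finset.mul_sum, Finset.sum_const, Finset.card_range,
            nsmul_eq_mul]
      _ ≤ T * C + θ * ∑ t ∈ Finset.range T, b t :=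
          add_le_add le_rfl (mul_sum_range_sum_Ico_div_mul_le hq hθ hKq hb)
  have hT' : (0 : 𝕜) < T := Nat.cast_pos.2 hT
  rw [one_div_mul_eq_div, div_mul_eq_mul_div, ← sub_div, div_le_iff₀' hT']
  exact sub_le_iff_le_add.2 hsum

/-- Epoch-wise recursion bound: if `a_t ≤ C + K Σ_{s=⌊t/q⌋q}^{t−1} b_s` for all `t < T`
with `Kq ≤ 1/2`, then `(1/T) Σ a_t − (1/(2T)) Σ b_t ≤ C`. -/
theorem epoch_recursion_average_bound
    (q T : ℕ) (hq : 1 ≤ q) (hT : 1 ≤ T)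
    (C K : ℝ) (hC : 0 ≤ C) (hK : 0 ≤ K) (hKq : K * (q : ℝ) ≤ 1 / 2)
    (a b : ℕ → ℝ)
    (ha : ∀ t < T, 0 ≤ a t) (hb : ∀ t < T, 0 ≤ b t)
    (hrec : ∀ t < T, a t ≤ C + K * ∑ s ∈ Finset.Ico (t / q * q) t, b s) :
    (1 / (T : ℝ)) * ∑ t ∈ Finset.range T, a t
      - 1 / (2 * (T : ℝ)) * ∑ t ∈ Finset.range T, b t ≤ C := by
  have hKq' : K * (q - 1) ≤ 1 / 2 := by linarith
  simpa only [div_div] using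
    epoch_recursion_average_bound_general hq hT one_half_pos.le hKq' hb hrec
end

section
/- Let Φ : ℝ^d → ℝ be differentiable with L_Φ-Lipschitz gradient, bounded below by Φ*, let S_o > 0, ω ≥ 0, let q ≥ 1 and T ≥ 1 be integers, let η > 0 satisfy 2 L_Φ η ≤ 1 and 6 S_o q η² ≤ 1, and let x_0, F_0, …, F_{T−1} ∈ ℝ^d define iterates x_{t+1} = x_t − η F_t. Suppose that for every t with 0 ≤ t ≤ T−1, ‖F_t − ∇Φ(x_t)‖² ≤ ω + 3 S_o η² Σ_{s = ⌊t/q⌋·q}^{t−1} ‖F_s‖². Then (1/T) Σ_{t=0}^{T−1} ‖∇Φ(x_t)‖² ≤ (2/(Tη)) (Φ(x_0) − Φ*) + ω. -/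
open scoped BigOperators

/-!
For a step `x ↦ x - η v` along an approximate gradient `v`, the descent inequality
`f y ≤ f x + ⟪∇f x, y - x⟫ + L/2 ‖y - x‖²` and polarization of `⟪∇f x, v⟫` show that `f`
decreases by at least `η/2 ‖∇f x‖² + η/2 (1 - Lη) ‖v‖² - η/2 ‖v - ∇f x‖²`. Summing over the steps,
`f` telescopes. A direction `F s` enters the error bound of at most `q` later steps, so the errors
add up to at most `T ω + 3 Sₒ q η² ∑ ‖F s‖²`. The stepsize conditions make `3 Sₒ q η² ≤ 1/2` and
`1 - Lη ≥ 1/2`, so the term in `∑ ‖F s‖²` is absorbed by the decrease.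
-/

open Finset
open scoped Gradient

section Taylor

variable {E G : Type*} [NormedAddCommGroup E] [NormedSpace ℝ E]
  [NormedAddCommGroup G] [NormedSpace ℝ G]

theorem norm_image_sub_sub_le_of_hasFDerivWithinAt_starConvex {f : E → G} {f' : E → E →L[ℝ] G}
    {s : Set E} {x y : E} {L : ℝ} (hs : StarConvex ℝ x s) (hy : y ∈ s)
    (hf : ∀ z ∈ s, HasFDerivWithinAt f (f' z) s z)
    (hL : ∀ z ∈ s, ‖f' z - f' x‖ ≤ L * ‖z - x‖) :
    ‖f y - f x - f' x (y - x)‖ ≤ L / 2 * ‖y - x‖ ^ 2 := by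
  let γ : ℝ → E := fun τ => x + τ • (y - x)
  have hγs : Set.MapsTo γ (Set.Icc 0 1) s := fun τ hτ => hs.add_smul_sub_mem hy hτ.1 hτ.2
  have hγ (τ : ℝ) : HasDerivAt γ (y - x) τ := by
    simpa [γ] using ((hasDerivAt_id τ).smul_const (y - x)).const_add x
  have hrem : ∀ τ ∈ Set.Icc (0 : ℝ) 1,
      HasDerivWithinAt (fun τ => f (γ τ) - f x - τ • f' x (y - x))
        ((f' (γ τ) - f' x) (y - x)) (Set.Icc 0 1) τ := fun τ hτ => by
    simpa using (((hf _ (hγs hτ)).comp_hasDerivWithinAt τ (hγ τ).hasDerivWithinAt hγs).sub_const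
      (f x)).fun_sub ((hasDerivWithinAt_id τ _).smul_const (f' x (y - x)))
  have hbound (τ : ℝ) : HasDerivAt (fun τ => L / 2 * ‖y - x‖ ^ 2 * τ ^ 2)
      (L * ‖y - x‖ ^ 2 * τ) τ :=
    ((hasDerivAt_pow 2 τ).const_mul (L / 2 * ‖y - x‖ ^ 2)).congr_deriv (by norm_num; ring)
  have hderiv_le : ∀ τ ∈ Set.Ico (0 : ℝ) 1,
      ‖(f' (γ τ) - f' x) (y - x)‖ ≤ L * ‖y - x‖ ^ 2 * τ := fun τ hτ =>
    calc ‖(f' (γ τ) - f' x) (y - x)‖ ≤ ‖f' (γ τ) - f' x‖ * ‖y - x‖ :=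
          ContinuousLinearMap.le_opNorm _ _
      _ ≤ L * ‖γ τ - x‖ * ‖y - x‖ := by
          gcongr
          exact hL _ (hγs (Set.Ico_subset_Icc_self hτ))
      _ = L * ‖y - x‖ ^ 2 * τ := by
          rw [add_sub_cancel_left, norm_smul, Real.norm_of_nonneg hτ.1]
          ring
  simpa [γ] using image_norm_le_of_norm_deriv_right_le_deriv_boundary
    (fun τ hτ => (hrem τ hτ).continuousWithinAt)
    (fun τ hτ => (hrem τ (Set.Ico_subset_Icc_self hτ)).mono_of_mem_nhdsWithin
      (Icc_mem_nhdsGE_of_mem hτ))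
    (by simp [γ]) hbound hderiv_le (Set.right_mem_Icc.2 zero_le_one)

end Taylor

section InexactGradient

variable {E : Type*} [NormedAddCommGroup E] [InnerProductSpace ℝ E] [CompleteSpace E]
  {f : E → ℝ} {L : ℝ}

theorem image_le_of_lipschitz_gradient (hf : Differentiable ℝ f)
    (hL : ∀ x y, ‖∇ f x - ∇ f y‖ ≤ L * ‖x - y‖) (x y : E) :
    f y ≤ f x + inner ℝ (∇ f x) (y - x) + L / 2 * ‖y - x‖ ^ 2 := by
  have hremainder := norm_image_sub_sub_le_of_hasFDerivWithinAt_starConvex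
    (f' := fun z => InnerProductSpace.toDual ℝ E (∇ f z)) (starConvex_univ x) (Set.mem_univ y)
    (fun z _ => (hf z).hasGradientAt.hasFDerivAt.hasFDerivWithinAt)
    (fun z _ => by simpa only [← map_sub, LinearIsometryEquiv.norm_map] using hL z x)
  rw [InnerProductSpace.toDual_apply_apply] at hremainder
  linarith [(Real.le_norm_self _).trans hremainder]

theorem image_sub_smul_le_of_lipschitz_gradient (hf : Differentiable ℝ f)
    (hL : ∀ x y, ‖∇ f x - ∇ f y‖ ≤ L * ‖x - y‖) (η : ℝ) (x v : E) :
    f (x - η • v) ≤ f x - η / 2 * ‖∇ f x‖ ^ 2 - η / 2 * (1 - L * η) * ‖v‖ ^ 2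
      + η / 2 * ‖v - ∇ f x‖ ^ 2 := by
  have hdescent := image_le_of_lipschitz_gradient hf hL x (x - η • v)
  rw [sub_sub_cancel_left, inner_neg_right, real_inner_smul_right, norm_neg, norm_smul, mul_pow,
    Real.norm_eq_abs, sq_abs] at hdescent
  have hpolarization := norm_sub_sq_real v (∇ f x)
  rw [real_inner_comm] at hpolarization
  rw [hpolarization]
  linarith

theorem sum_norm_sq_gradient_le (hf : Differentiable ℝ f)
    (hL : ∀ x y, ‖∇ f x - ∇ f y‖ ≤ L * ‖x - y‖) {η : ℝ} {T : ℕ} {x v : ℕ → E}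
    (hx : ∀ t < T, x (t + 1) = x t - η • v t) :
    η / 2 * ∑ t ∈ range T, ‖∇ f (x t)‖ ^ 2 ≤ f (x 0) - f (x T)
      - η / 2 * (1 - L * η) * ∑ t ∈ range T, ‖v t‖ ^ 2
      + η / 2 * ∑ t ∈ range T, ‖v t - ∇ f (x t)‖ ^ 2 := by
  rw [← sum_range_sub' (fun t => f (x t))]
  simp only [mul_sum, ← sum_sub_distrib, ← sum_add_distrib]
  refine sum_le_sum fun t ht => ?_
  have hstep := image_sub_smul_le_of_lipschitz_gradient hf hL η (x t) (v t)
  rw [← hx t (mem_range.1 ht)] at hstep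
  linarith

end InexactGradient

theorem sum_sum_le_nsmul_sum {ι κ M : Type*} [DecidableEq κ] [AddCommMonoid M] [PartialOrder M]
    [IsOrderedAddMonoid M] {I : Finset ι} {J : Finset κ} {S : ι → Finset κ} {a : κ → M} {n : ℕ}
    (hS : ∀ i ∈ I, S i ⊆ J) (ha : ∀ j ∈ J, 0 ≤ a j) (hn : ∀ j ∈ J, #{i ∈ I | j ∈ S i} ≤ n) :
    ∑ i ∈ I, ∑ j ∈ S i, a j ≤ n • ∑ j ∈ J, a j :=
  calc ∑ i ∈ I, ∑ j ∈ S i, a j = ∑ j ∈ J, ∑ i ∈ I with j ∈ S i, a j :=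
        sum_comm' fun i j => by grind
    _ = ∑ j ∈ J, #{i ∈ I | j ∈ S i} • a j := by simp only [sum_const]
    _ ≤ ∑ j ∈ J, n • a j := sum_le_sum fun j hj => nsmul_le_nsmul_left (ha j hj) (hn j hj)
    _ = n • ∑ j ∈ J, a j := sum_nsmul _ _ _

theorem sum_sum_Ico_le_nsmul_sum {M : Type*} [AddCommMonoid M] [PartialOrder M]
    [IsOrderedAddMonoid M] {a : ℕ → M} {b : ℕ → ℕ} {q T : ℕ} (ha : ∀ s < T, 0 ≤ a s)
    (hb : ∀ t < T, t ≤ b t + q) :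
    ∑ t ∈ range T, ∑ s ∈ Ico (b t) t, a s ≤ q • ∑ s ∈ range T, a s := by
  refine sum_sum_le_nsmul_sum (fun t ht => by grind) (fun s hs => ha s (mem_range.1 hs))
    fun s _ => ?_
  have hwindow : {t ∈ range T | s ∈ Ico (b t) t} ⊆ Ioc s (s + q) := by grind
  simpa using card_le_card hwindow

theorem sum_le_of_le_add_mul_sum_Ico {e a : ℕ → ℝ} {b : ℕ → ℕ} {q T : ℕ} {ω c : ℝ} (hc : 0 ≤ c)
    (ha : ∀ s < T, 0 ≤ a s) (hb : ∀ t < T, t ≤ b t + q)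
    (he : ∀ t < T, e t ≤ ω + c * ∑ s ∈ Ico (b t) t, a s) :
    ∑ t ∈ range T, e t ≤ T * ω + c * (q * ∑ s ∈ range T, a s) :=
  calc ∑ t ∈ range T, e t ≤ ∑ t ∈ range T, (ω + c * ∑ s ∈ Ico (b t) t, a s) :=
        sum_le_sum fun t ht => he t (mem_range.1 ht)
    _ = T * ω + c * ∑ t ∈ range T, ∑ s ∈ Ico (b t) t, a s := by
        rw [sum_add_distrib, sum_const, card_range, nsmul_eq_mul, mul_sum]
    _ ≤ T * ω + c * (q * ∑ s ∈ range T, a s) := by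
        gcongr
        simpa only [nsmul_eq_mul] using sum_sum_Ico_le_nsmul_sum ha hb

-- `b t` is the step of the last restart of the estimator before `t`.
theorem sarah_compositional_key_lemma_general
    {E : Type*} [NormedAddCommGroup E] [InnerProductSpace ℝ E] [CompleteSpace E]
    {L η So ω : ℝ} {q T : ℕ} (hT : 1 ≤ T) (hSo : 0 ≤ So) (hη : 0 < η)
    (hη1 : 2 * L * η ≤ 1) (hη2 : 6 * So * q * η ^ 2 ≤ 1)
    {f : E → ℝ} (hf : Differentiable ℝ f) (hL : ∀ x y, ‖∇ f x - ∇ f y‖ ≤ L * ‖x - y‖)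
    {x F : ℕ → E} (hx : ∀ t < T, x (t + 1) = x t - η • F t)
    {b : ℕ → ℕ} (hb : ∀ t < T, t ≤ b t + q)
    (herr : ∀ t < T, ‖F t - ∇ f (x t)‖ ^ 2
        ≤ ω + 3 * So * η ^ 2 * ∑ s ∈ Ico (b t) t, ‖F s‖ ^ 2) :
    1 / (T : ℝ) * ∑ t ∈ range T, ‖∇ f (x t)‖ ^ 2 ≤ 2 / (T * η) * (f (x 0) - f (x T)) + ω := by
  set A := ∑ t ∈ range T, ‖F t‖ ^ 2
  set G := ∑ t ∈ range T, ‖∇ f (x t)‖ ^ 2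
  have hA : 0 ≤ A := by positivity
  have herror : ∑ t ∈ range T, ‖F t - ∇ f (x t)‖ ^ 2 ≤ T * ω + A / 2 :=
    calc _ ≤ T * ω + 3 * So * η ^ 2 * (q * A) :=
          sum_le_of_le_add_mul_sum_Ico (by positivity) (fun _ _ => by positivity) hb herr
      _ ≤ T * ω + A / 2 := by linarith [mul_le_mul_of_nonneg_right hη2 hA]
  have habsorb : η / 2 * (A / 2) ≤ η / 2 * (1 - L * η) * A := by
    rw [mul_assoc, div_eq_inv_mul A]
    gcongr
    linarith
  have htotal : η / 2 * G ≤ f (x 0) - f (x T) + η / 2 * (T * ω) := by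
    linarith [sum_norm_sq_gradient_le hf hL hx,
      mul_le_mul_of_nonneg_left herror (half_pos hη).le]
  calc 1 / (T : ℝ) * G = 2 / (T * η) * (η / 2 * G) := by field_simp
    _ ≤ 2 / (T * η) * (f (x 0) - f (x T) + η / 2 * (T * ω)) := by gcongr
    _ = 2 / (T * η) * (f (x 0) - f (x T)) + ω := by field_simp

/-- Key lemma (deterministic form): along iterates `x_{t+1} = x_t − η F_t`, if the
gradient-estimation error satisfies the SARAH epoch recursion
`‖F_t − ∇Φ(x_t)‖² ≤ ω + 3 S_o η² Σ_{s=⌊t/q⌋q}^{t−1} ‖F_s‖²` and the stepsize satisfies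
`2 L_Φ η ≤ 1` and `6 S_o q η² ≤ 1`, then
`(1/T) Σ ‖∇Φ(x_t)‖² ≤ (2/(Tη))(Φ(x_0) − Φ*) + ω`. -/
theorem sarah_compositional_key_lemma
    (d : ℕ) (LΦ η Φstar So ω : ℝ) (q T : ℕ) (hq : 1 ≤ q) (hT : 1 ≤ T)
    (hLΦ : 0 ≤ LΦ) (hSo : 0 < So) (hω : 0 ≤ ω) (hη : 0 < η)
    (hη1 : 2 * LΦ * η ≤ 1) (hη2 : 6 * So * (q : ℝ) * η ^ 2 ≤ 1)
    (Φ : EuclideanSpace ℝ (Fin d) → ℝ) (hΦ : Differentiable ℝ Φ)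
    (hlip : ∀ x x', ‖gradient Φ x - gradient Φ x'‖ ≤ LΦ * ‖x - x'‖)
    (hbound : ∀ x, Φstar ≤ Φ x)
    (x F : ℕ → EuclideanSpace ℝ (Fin d))
    (hupd : ∀ t < T, x (t + 1) = x t - η • F t)
    (herr : ∀ t < T, ‖F t - gradient Φ (x t)‖ ^ 2
        ≤ ω + 3 * So * η ^ 2 * ∑ s ∈ Finset.Ico (t / q * q) t, ‖F s‖ ^ 2) :
    (1 / (T : ℝ)) * ∑ t ∈ Finset.range T, ‖gradient Φ (x t)‖ ^ 2
      ≤ 2 / ((T : ℝ) * η) * (Φ (x 0) - Φstar) + ω :=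
  (sarah_compositional_key_lemma_general hT hSo.le hη hη1 hη2 hΦ hlip hupd
    (fun _ _ => (Nat.lt_div_mul_add hq).le) herr).trans (by gcongr; exact hbound _)
end

section
/- Let f_1, …, f_n : ℝ^l → ℝ be differentiable and set ∇f(y) = (1/n) Σ_{i=1}^n ∇f_i(y). Let G, G′ be l × d real matrices, let u, u′ ∈ ℝ^l, and let F₀ ∈ ℝ^d. Then (1/n) Σ_{i=1}^n ‖F₀ − (G′)ᵀ ∇f_i(u′) + Gᵀ ∇f_i(u) − Gᵀ ∇f(u)‖² ≤ ‖F₀ − (G′)ᵀ ∇f(u′)‖² + (1/n) Σ_{i=1}^n ‖Gᵀ ∇f_i(u) − (G′)ᵀ ∇f_i(u′)‖². -/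
open scoped BigOperators

/-!
Put `x i = Gᵀ∇f_i(u)`, `y i = (G')ᵀ∇f_i(u')` and `z i = x i - y i`. Since `Gᵀ` and `(G')ᵀ` are
linear, the new error is `(F₀ - 𝔼 y) + (z i - 𝔼 z)`, where `𝔼` denotes the mean over `i`. The
second summand has mean zero, so it is orthogonal on average to the constant first summand and the
mean squares add up; finally, the variance of `z` is at most its second moment.
-/

section WeightedMean

variable {ι : Type*} {s : Finset ι}

lemma sum_smul_sub_weighted_mean_eq_zero {R M : Type*} [Ring R] [AddCommGroup M] [Module R M]
    {w : ι → R} (hw : ∑ i ∈ s, w i = 1) (z : ι → M) :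
    ∑ i ∈ s, w i • (z i - ∑ j ∈ s, w j • z j) = 0 := by
  simp only [smul_sub, Finset.sum_sub_distrib, ← Finset.sum_smul, hw, one_smul, sub_self]

variable {E : Type*} [NormedAddCommGroup E] [InnerProductSpace ℝ E] {w : ι → ℝ}

lemma sum_mul_norm_add_sq_of_sum_smul_eq_zero (c : E) {y : ι → E}
    (hy : ∑ i ∈ s, w i • y i = 0) :
    ∑ i ∈ s, w i * ‖c + y i‖ ^ 2 = (∑ i ∈ s, w i) * ‖c‖ ^ 2 + ∑ i ∈ s, w i * ‖y i‖ ^ 2 := by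
  have cross_term : ∑ i ∈ s, w i * inner ℝ c (y i) = 0 := by
    simp only [← real_inner_smul_right, ← inner_sum, hy, inner_zero_right]
  calc ∑ i ∈ s, w i * ‖c + y i‖ ^ 2
      = ∑ i ∈ s, (w i * ‖c‖ ^ 2 + 2 * (w i * inner ℝ c (y i)) + w i * ‖y i‖ ^ 2) := by
        refine Finset.sum_congr rfl fun i _ => ?_
        rw [norm_add_sq_real]
        ring
    _ = (∑ i ∈ s, w i) * ‖c‖ ^ 2 + 2 * ∑ i ∈ s, w i * inner ℝ c (y i)
          + ∑ i ∈ s, w i * ‖y i‖ ^ 2 := by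
        simp only [Finset.sum_add_distrib, Finset.sum_mul, Finset.mul_sum]
    _ = (∑ i ∈ s, w i) * ‖c‖ ^ 2 + ∑ i ∈ s, w i * ‖y i‖ ^ 2 := by
        rw [cross_term, mul_zero, add_zero]

lemma sum_mul_norm_sub_weighted_mean_sq (hw : ∑ i ∈ s, w i = 1) (z : ι → E) :
    ∑ i ∈ s, w i * ‖z i - ∑ j ∈ s, w j • z j‖ ^ 2
      = ∑ i ∈ s, w i * ‖z i‖ ^ 2 - ‖∑ i ∈ s, w i • z i‖ ^ 2 := by
  have second_moment := sum_mul_norm_add_sq_of_sum_smul_eq_zero (∑ i ∈ s, w i • z i)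
    (sum_smul_sub_weighted_mean_eq_zero hw z)
  simp only [add_sub_cancel, hw, one_mul] at second_moment
  exact eq_sub_of_add_eq' second_moment.symm

theorem full_gradient_one_step_recursion_general (hw : ∑ i ∈ s, w i = 1) (c : E) (x y : ι → E) :
    ∑ i ∈ s, w i * ‖c - y i + x i - ∑ j ∈ s, w j • x j‖ ^ 2
      ≤ ‖c - ∑ i ∈ s, w i • y i‖ ^ 2 + ∑ i ∈ s, w i * ‖x i - y i‖ ^ 2 := by
  have mean_sub : ∑ i ∈ s, w i • (x i - y i) = ∑ i ∈ s, w i • x i - ∑ i ∈ s, w i • y i := by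
    simp only [smul_sub, Finset.sum_sub_distrib]
  have error_split (i : ι) : c - y i + x i - ∑ j ∈ s, w j • x j
      = (c - ∑ j ∈ s, w j • y j) + ((x i - y i) - ∑ j ∈ s, w j • (x j - y j)) := by
    rw [mean_sub]
    abel
  calc ∑ i ∈ s, w i * ‖c - y i + x i - ∑ j ∈ s, w j • x j‖ ^ 2
      = ‖c - ∑ i ∈ s, w i • y i‖ ^ 2
          + ∑ i ∈ s, w i * ‖(x i - y i) - ∑ j ∈ s, w j • (x j - y j)‖ ^ 2 := by
        simp only [error_split]
        rw [sum_mul_norm_add_sq_of_sum_smul_eq_zero _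
          (sum_smul_sub_weighted_mean_eq_zero hw fun i => x i - y i), hw, one_mul]
    _ ≤ ‖c - ∑ i ∈ s, w i • y i‖ ^ 2 + ∑ i ∈ s, w i * ‖x i - y i‖ ^ 2 := by
        rw [sum_mul_norm_sub_weighted_mean_sq hw fun i => x i - y i]
        gcongr
        exact sub_le_self _ (sq_nonneg _)

end WeightedMean

/-- One-step recursion inequality for the full-gradient estimator `F_t` of
SARAH-Compositional: with `∇f(y) = (1/n) Σ ∇f_i(y)`,
`(1/n) Σ_i ‖F₀ − (G')ᵀ∇f_i(u') + Gᵀ∇f_i(u) − Gᵀ∇f(u)‖²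
  ≤ ‖F₀ − (G')ᵀ∇f(u')‖² + (1/n) Σ_i ‖Gᵀ∇f_i(u) − (G')ᵀ∇f_i(u')‖²`. -/
theorem full_gradient_one_step_recursion
    (d l n : ℕ) (hn : 0 < n)
    (f : Fin n → EuclideanSpace ℝ (Fin l) → ℝ)
    (hfdiff : ∀ i, Differentiable ℝ (f i))
    (gradf : EuclideanSpace ℝ (Fin l) → EuclideanSpace ℝ (Fin l))
    (hgradf : gradf = fun y => (1 / (n : ℝ)) • ∑ i, gradient (f i) y)
    (G G' : EuclideanSpace ℝ (Fin d) →L[ℝ] EuclideanSpace ℝ (Fin l))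
    (u u' : EuclideanSpace ℝ (Fin l)) (F₀ : EuclideanSpace ℝ (Fin d)) :
    (1 / (n : ℝ)) * ∑ i, ‖F₀ - (ContinuousLinearMap.adjoint G') (gradient (f i) u')
          + (ContinuousLinearMap.adjoint G) (gradient (f i) u)
          - (ContinuousLinearMap.adjoint G) (gradf u)‖ ^ 2
      ≤ ‖F₀ - (ContinuousLinearMap.adjoint G') (gradf u')‖ ^ 2
        + (1 / (n : ℝ)) * ∑ i, ‖(ContinuousLinearMap.adjoint G) (gradient (f i) u)
            - (ContinuousLinearMap.adjoint G') (gradient (f i) u')‖ ^ 2 := by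
  have weights_sum : ∑ _i : Fin n, 1 / (n : ℝ) = 1 := by simp [hn.ne']
  simpa only [hgradf, map_smul, map_sum, Finset.mul_sum, Finset.smul_sum] using
    full_gradient_one_step_recursion_general weights_sum F₀
      (fun i => ContinuousLinearMap.adjoint G (gradient (f i) u))
      (fun i => ContinuousLinearMap.adjoint G' (gradient (f i) u'))
end

section
/- For all real numbers A > 0, B > 0 and S₁ > 0, S₂ > 0, S₃ > 0, (S₁ + S₂ + S₃)(1 + 2/S₃)(A/S₁ + B/S₂) ≥ (√(S₁+S₂) + √2)² · (√A + √B)² / (S₁ + S₂). -/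
/-!
Both factors are bounded below by Cauchy–Schwarz. With `T = S₁ + S₂`, the pairs `(T, S₃)` and
`(1, 2 / S₃)` give `(√T + √2)² ≤ (T + S₃)(1 + 2 / S₃)`, where `S₃` drops out of the left-hand side
because `S₃ * (2 / S₃) = 2`. The pairs `(S₁, S₂)` and `(A / S₁, B / S₂)` give
`(√A + √B)² ≤ T (A / S₁ + B / S₂)`.
-/

theorem sq_sum_sqrt_mul_le_sum_mul_sum {ι : Type*} (s : Finset ι) {f g : ι → ℝ}
    (hf : ∀ i ∈ s, 0 ≤ f i) (hg : ∀ i ∈ s, 0 ≤ g i) :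
    (∑ i ∈ s, √(f i * g i)) ^ 2 ≤ (∑ i ∈ s, f i) * ∑ i ∈ s, g i :=
  Finset.sum_sq_le_sum_mul_sum_of_sq_le_mul s hf hg fun i hi ↦
    (Real.sq_sqrt (mul_nonneg (hf i hi) (hg i hi))).le

theorem sq_sqrt_mul_add_sqrt_mul_le_add_mul_add {a b c d : ℝ}
    (ha : 0 ≤ a) (hb : 0 ≤ b) (hc : 0 ≤ c) (hd : 0 ≤ d) :
    (√(a * c) + √(b * d)) ^ 2 ≤ (a + b) * (c + d) := by
  simpa [Fin.sum_univ_two] using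
    sq_sum_sqrt_mul_le_sum_mul_sum Finset.univ (f := ![a, b]) (g := ![c, d])
      (by simp [Fin.forall_fin_two, ha, hb]) (by simp [Fin.forall_fin_two, hc, hd])

theorem sq_sqrt_add_sqrt_le_add_mul_one_add_div {a b y : ℝ}
    (ha : 0 ≤ a) (hb : 0 ≤ b) (hy : 0 < y) :
    (√a + √b) ^ 2 ≤ (a + y) * (1 + b / y) := by
  simpa only [mul_one, mul_div_cancel₀ b hy.ne'] using
    sq_sqrt_mul_add_sqrt_mul_le_add_mul_add ha hy.le zero_le_one (div_nonneg hb hy.le)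

theorem sq_sqrt_add_sqrt_div_add_le_div_add_div {a b x y : ℝ}
    (ha : 0 ≤ a) (hb : 0 ≤ b) (hx : 0 < x) (hy : 0 < y) :
    (√a + √b) ^ 2 / (x + y) ≤ a / x + b / y := by
  rw [div_le_iff₀' (add_pos hx hy)]
  simpa only [mul_div_cancel₀ a hx.ne', mul_div_cancel₀ b hy.ne'] using
    sq_sqrt_mul_add_sqrt_mul_le_add_mul_add hx.le hy.le (div_nonneg ha hx.le) (div_nonneg hb hy.le)

/-- Combined optimal-batch-size lower bound: for `A, B, S₁, S₂, S₃ > 0`,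
`(S₁ + S₂ + S₃)(1 + 2/S₃)(A/S₁ + B/S₂) ≥ (√(S₁+S₂) + √2)²(√A + √B)²/(S₁+S₂)`. -/
theorem batch_size_combined_lower_bound
    (A B S₁ S₂ S₃ : ℝ) (hA : 0 < A) (hB : 0 < B)
    (hS₁ : 0 < S₁) (hS₂ : 0 < S₂) (hS₃ : 0 < S₃) :
    (Real.sqrt (S₁ + S₂) + Real.sqrt 2) ^ 2 * (Real.sqrt A + Real.sqrt B) ^ 2 / (S₁ + S₂)
      ≤ (S₁ + S₂ + S₃) * (1 + 2 / S₃) * (A / S₁ + B / S₂) := by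
  have hT : 0 < S₁ + S₂ := add_pos hS₁ hS₂
  calc
    _ = (√(S₁ + S₂) + √2) ^ 2 * ((√A + √B) ^ 2 / (S₁ + S₂)) := mul_div_assoc ..
    _ ≤ (S₁ + S₂ + S₃) * (1 + 2 / S₃) * (A / S₁ + B / S₂) := by
      gcongr
      · exact sq_sqrt_add_sqrt_le_add_mul_one_add_div hT.le zero_le_two hS₃
      · exact sq_sqrt_add_sqrt_div_add_le_div_add_div hA.le hB.le hS₁ hS₂
end
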